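/- Let N ≤ P and M ≤ N be positive integers, let C > 0 be a real constant, and let A ∈ ℂ^{N×P} satisfy A·Aᴴ = C·I_N. Let T ∈ ℂ^{P×P} be Hermitian positive semidefinite and set S = A·T·Aᴴ ∈ ℂ^{N×N}. Then a matrix Φ ∈ ℂ^{M×N} minimizes J(Φ) = ‖Aᴴ·Φᴴ·Φ·A − T‖_F² over all matrices in ℂ^{M×N} if and only if Φᴴ·Φ = C^{-2}·S_M for some rank-M truncation S_M of S, i.e., S_M = U·D_M·Uᴴ where S = U·D·Uᴴ is a unitary diagonalization of S with the (real, nonnegative) eigenvalues on the diagonal of D arranged in nonincreasing order and D_M is obtained from D by setting all but its M largest diagonal entries to zero. -/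

import Mathlib

open Matrix ComplexOrder

/-- Squared Frobenius norm of a complex matrix. -/
noncomputable def frobSq {m n : Type*} [Fintype m] [Fintype n] (X : Matrix m n ℂ) : ℝ :=
  ∑ i, ∑ j, ‖X i j‖ ^ 2

open scoped MatrixOrder in
lemma psd_sq_unique {n : Type*} [Fintype n] [DecidableEq n] {A B : Matrix n n ℂ}
    (hA : A.PosSemidef) (hB : B.PosSemidef) (h : A * A = B * B) : A = B := by
  have h1 := CFC.sqrt_unique (a := B * B) h hA.nonneg
  have h2 := CFC.sqrt_unique (a := B * B) rfl hB.nonneg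
  exact h1.symm.trans h2

lemma frobSq_trace {m n : Type*} [Fintype m] [Fintype n] (X : Matrix m n ℂ) :
    (frobSq X : ℂ) = trace (Xᴴ * X) := by
  simp only [frobSq, trace, diag, mul_apply, conjTranspose_apply]
  rw [Finset.sum_comm]
  push_cast
  refine Finset.sum_congr rfl fun i _ => Finset.sum_congr rfl fun j _ => ?_
  rw [Complex.star_def, Complex.conj_mul']

lemma frobSq_nonneg {m n : Type*} [Fintype m] [Fintype n] (X : Matrix m n ℂ) : 0 ≤ frobSq X := by
  unfold frobSq; positivity

lemma frobSq_eq_zero {m n : Type*} [Fintype m] [Fintype n] (X : Matrix m n ℂ)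
    (h : frobSq X = 0) : X = 0 := by
  unfold frobSq at h
  ext i j
  rw [Finset.sum_eq_zero_iff_of_nonneg (fun i _ => by positivity)] at h
  have h2 := h i (Finset.mem_univ _)
  rw [Finset.sum_eq_zero_iff_of_nonneg (fun i _ => by positivity)] at h2
  simpa using h2 j (Finset.mem_univ _)

lemma frobSq_unitary {n : Type*} [Fintype n] [DecidableEq n] (V U Y : Matrix n n ℂ)
    (hV : V * Vᴴ = 1) (hU : U * Uᴴ = 1) : frobSq (Vᴴ * Y * U) = frobSq Y := by
  have : (frobSq (Vᴴ * Y * U) : ℂ) = frobSq Y := by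
    rw [frobSq_trace, frobSq_trace]
    simp only [conjTranspose_mul, conjTranspose_conjTranspose]
    rw [trace_mul_comm]
    have : Vᴴ * Y * U * (Uᴴ * (Yᴴ * V)) = Vᴴ * (Y * Yᴴ * V) := by
      calc _ = Vᴴ * Y * (U * Uᴴ) * Yᴴ * V := by simp only [Matrix.mul_assoc]
        _ = _ := by rw [hU]; simp only [Matrix.mul_assoc, Matrix.mul_one]
    rw [this, trace_mul_comm, Matrix.mul_assoc, hV, Matrix.mul_one, trace_mul_comm]
  exact_mod_cast this

lemma herm_diag {n : Type*} [Fintype n] [DecidableEq n] {Z : Matrix n n ℂ} (hZ : Z.IsHermitian) :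
    ∃ V : Matrix n n ℂ, Vᴴ * V = 1 ∧ V * Vᴴ = 1 ∧
      Z = V * diagonal (fun i => (hZ.eigenvalues i : ℂ)) * Vᴴ := by
  refine ⟨hZ.eigenvectorUnitary, ?_, ?_, ?_⟩
  · exact Unitary.coe_star_mul_self hZ.eigenvectorUnitary
  · exact Unitary.coe_mul_star_self hZ.eigenvectorUnitary
  · exact hZ.spectral_theorem

lemma reduction {N P : ℕ} (C : ℝ) 
    (A : Matrix (Fin N) (Fin P) ℂ) (hA : A * Aᴴ = (C : ℂ) • 1)
    (T : Matrix (Fin P) (Fin P) ℂ) (hT : T.IsHermitian)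
    (B : Matrix (Fin N) (Fin N) ℂ) (hB : B.IsHermitian) (hS : A * T * Aᴴ = ((C : ℂ) ^ 2) • B)
    (Q : Matrix (Fin N) (Fin N) ℂ) (hQ : Q.IsHermitian) :
    frobSq (Aᴴ * Q * A - T) = C ^ 2 * frobSq (Q - B) + (frobSq T - C ^ 2 * frobSq B) := by
  have : (frobSq (Aᴴ * Q * A - T) : ℂ)
      = (C : ℂ) ^ 2 * frobSq (Q - B) + (frobSq T - (C : ℂ) ^ 2 * frobSq B) := by
    simp only [frobSq_trace]
    simp only [conjTranspose_sub, conjTranspose_mul, conjTranspose_conjTranspose, hT.eq, hB.eq,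
      hQ.eq]
    have e1 : trace (Aᴴ * (Q * A) * (Aᴴ * Q * A)) = (C : ℂ) ^ 2 * trace (Q * Q) := by
      calc _ = trace (Aᴴ * (Q * (A * Aᴴ) * Q * A)) := by simp only [Matrix.mul_assoc]
        _ = trace (Q * (A * Aᴴ) * Q * (A * Aᴴ)) := by
          rw [trace_mul_comm]; simp only [Matrix.mul_assoc]
        _ = _ := by rw [hA]; simp; ring
    have e2 : trace (T * (Aᴴ * Q * A)) = (C : ℂ) ^ 2 * trace (B * Q) := by
      calc _ = trace ((T * Aᴴ * Q) * A) := by simp only [Matrix.mul_assoc]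
        _ = trace ((A * T * Aᴴ) * Q) := by
          rw [trace_mul_comm]; simp only [Matrix.mul_assoc]
        _ = _ := by rw [hS]; simp
    have e3 : trace (Aᴴ * (Q * A) * T) = (C : ℂ) ^ 2 * trace (B * Q) := by
      rw [trace_mul_comm, ← e2]; simp only [Matrix.mul_assoc]
    simp only [sub_mul, mul_sub, trace_sub, e1, e2, e3, trace_mul_comm Q B]
    ring
  exact_mod_cast this

lemma poly_zero (a b c d : ℝ) (h : ∀ t : ℝ, 0 ≤ a * t + b * t ^ 2 + c * t ^ 3 + d * t ^ 4) :
    a = 0 := by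
  have h1 : HasDerivAt (fun t : ℝ => a * t + b * t ^ 2 + c * t ^ 3 + d * t ^ 4) a 0 := by
    have := ((((hasDerivAt_id (0:ℝ)).const_mul a).add ((hasDerivAt_pow 2 (0:ℝ)).const_mul b)).add
      ((hasDerivAt_pow 3 (0:ℝ)).const_mul c)).add ((hasDerivAt_pow 4 (0:ℝ)).const_mul d)
    exact this.congr_deriv (by simp)
  refine IsLocalMin.hasDerivAt_eq_zero (Filter.Eventually.of_forall fun t => ?_) h1
  simpa using h t

lemma stationary {M N : ℕ} (B : Matrix (Fin N) (Fin N) ℂ) (hB : B.IsHermitian)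
    (Φ : Matrix (Fin M) (Fin N) ℂ)
    (h : ∀ Ψ : Matrix (Fin M) (Fin N) ℂ, frobSq (Φᴴ * Φ - B) ≤ frobSq (Ψᴴ * Ψ - B)) :
    Φ * (Φᴴ * Φ - B) = 0 := by
  set G := Φᴴ * Φ - B with hG
  have hGh : Gᴴ = G := by simp [hG, hB.eq]
  set X := Φᴴ * Φ with hX
  have hXh : Xᴴ = X := by simp [hX]
  set H1 := G * X + X * G with hH1
  set H2 := G * X * G with hH2
  have hH1h : H1ᴴ = H1 := by simp [hH1, hGh, hXh, add_comm]
  have hH2h : H2ᴴ = H2 := by simp [hH2, hGh, hXh, Matrix.mul_assoc]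
  have key : ∀ t : ℝ, frobSq ((Φ + (t:ℂ) • (Φ * G))ᴴ * (Φ + (t:ℂ) • (Φ * G)) - B) =
      frobSq G + 4 * frobSq (Φ * G) * t + (frobSq H1 + 2 * (trace (G * H2)).re) * t ^ 2
        + 2 * (trace (H1 * H2)).re * t ^ 3 + frobSq H2 * t ^ 4 := by
    intro t
    have e0 : (Φ + (t:ℂ) • (Φ * G))ᴴ * (Φ + (t:ℂ) • (Φ * G)) - B
        = G + (t:ℂ) • H1 + ((t:ℂ)^2) • H2 := by
      simp only [conjTranspose_add, conjTranspose_smul, conjTranspose_mul, hGh, Complex.star_def,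
        Complex.conj_ofReal, Matrix.add_mul, Matrix.mul_add, Matrix.smul_mul, Matrix.mul_smul,
        hH1, hH2, smul_add, smul_smul]
      have : Φᴴ * Φ = G + B := by rw [hG]; simp [hX]
      have h3 : G * Φᴴ * Φ = G * X := by rw [hX, Matrix.mul_assoc]
      have h4 : Φᴴ * (Φ * G) = X * G := by rw [hX, Matrix.mul_assoc]
      have h5 : G * Φᴴ * (Φ * G) = G * X * G := by simp only [hX, Matrix.mul_assoc]
      rw [h3, h4, h5, this]
      module
    rw [e0]
    have e1 : (frobSq (G + (t:ℂ) • H1 + ((t:ℂ)^2) • H2) : ℂ) = frobSq G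
        + 4 * frobSq (Φ * G) * t + (frobSq H1 + 2 * (trace (G * H2))) * t ^ 2
        + 2 * (trace (H1 * H2)) * t ^ 3 + frobSq H2 * t ^ 4 := by
      simp only [frobSq_trace, conjTranspose_add, conjTranspose_smul, hGh, hH1h, hH2h,
        Complex.star_def, Complex.conj_ofReal, map_pow, conjTranspose_mul]
      have e2 : trace (G * Φᴴ * (Φ * G)) = trace (G * H1) / 2 := by
        have : G * Φᴴ * (Φ * G) = G * (X * G) := by simp only [hX, Matrix.mul_assoc]
        rw [this, hH1, mul_add, trace_add, ← Matrix.mul_assoc, trace_mul_comm (G * X) G]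
        ring
      rw [e2]
      simp only [Matrix.add_mul, Matrix.mul_add, Matrix.smul_mul, Matrix.mul_smul, trace_add,
        trace_smul, smul_eq_mul,
        trace_mul_comm H1 G, trace_mul_comm H2 G, trace_mul_comm H2 H1]
      ring
    have := congrArg Complex.re e1
    simpa [← Complex.ofReal_pow] using this
  have := poly_zero _ _ _ _ (fun t => by
    have h2 := h (Φ + (t:ℂ) • (Φ * G))
    rw [key t] at h2
    have h3 : 0 ≤ 4 * frobSq (Φ * G) * t + (frobSq H1 + 2 * (trace (G * H2)).re) * t ^ 2
        + 2 * (trace (H1 * H2)).re * t ^ 3 + frobSq H2 * t ^ 4 := by linarith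
    exact h3)
  exact frobSq_eq_zero _ (by linarith)

lemma exists_factor {M N : ℕ} (V : Matrix (Fin N) (Fin N) ℂ) (s : Fin N → ℝ) (hs : ∀ i, 0 ≤ s i)
    (I : Finset (Fin N)) (hI : I.card = M) :
    ∃ Ψ : Matrix (Fin M) (Fin N) ℂ, Ψᴴ * Ψ =
      V * diagonal (fun i => if i ∈ I then (s i : ℂ) else 0) * Vᴴ := by
  let e := I.orderIsoOfFin hI
  refine ⟨Matrix.of fun m n => (Real.sqrt (s (e m)) : ℂ) * star (V n (e m)), ?_⟩
  ext a b
  rw [mul_apply, mul_apply]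
  simp only [conjTranspose_apply, mul_diagonal, of_apply]
  have : ∀ i, V a i * (if i ∈ I then (s i : ℂ) else 0) * star (V b i) =
      if i ∈ I then V a i * (s i : ℂ) * star (V b i) else 0 := by
    intro i; split_ifs <;> simp
  simp only [this]
  rw [Finset.sum_ite_mem, Finset.univ_inter, ← Finset.sum_coe_sort I, ← e.toEquiv.sum_comp]
  refine Finset.sum_congr rfl fun m _ => ?_
  have h2 : ((Real.sqrt (s (e m)) : ℂ)) * (Real.sqrt (s (e m)) : ℂ) = (s (e m) : ℂ) := by
    rw [← Complex.ofReal_mul, Real.mul_self_sqrt (hs _)]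
  simp only [star_mul', star_star, Complex.star_def, Complex.conj_ofReal, Complex.conj_conj,
    RelIso.coe_fn_toEquiv]
  rw [← h2]; ring

lemma frobSq_diag {N : ℕ} (a : Fin N → ℂ) : frobSq (diagonal a) = ∑ i, ‖a i‖ ^ 2 := by
  unfold frobSq
  refine Finset.sum_congr rfl fun i _ => ?_
  rw [Finset.sum_eq_single i] <;> simp +contextual [diagonal_apply, eq_comm]

lemma frobSq_conj_diag {N : ℕ} (V : Matrix (Fin N) (Fin N) ℂ) (hV : Vᴴ * V = 1) (hV' : V * Vᴴ = 1)
    (a b : Fin N → ℂ) :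
    frobSq (V * diagonal a * Vᴴ - V * diagonal b * Vᴴ) = ∑ i, ‖a i - b i‖ ^ 2 := by
  rw [← frobSq_unitary V V _ hV' hV']
  have : Vᴴ * (V * diagonal a * Vᴴ - V * diagonal b * Vᴴ) * V = diagonal (fun i => a i - b i) := by
    have e : ∀ D : Matrix (Fin N) (Fin N) ℂ, Vᴴ * (V * D * Vᴴ) * V = D := by
      intro D
      calc _ = (Vᴴ * V) * D * (Vᴴ * V) := by simp only [Matrix.mul_assoc]
        _ = D := by rw [hV]; simp
    rw [mul_sub, sub_mul, e, e, diagonal_sub]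
  rw [this, frobSq_diag]

lemma rank_gram_le {M N : ℕ} (Ψ : Matrix (Fin M) (Fin N) ℂ) : (Ψᴴ * Ψ).rank ≤ M := by
  rw [rank_conjTranspose_mul_self]
  simpa using rank_le_card_height Ψ

lemma card_support_le {M N : ℕ} (Ψ : Matrix (Fin M) (Fin N) ℂ) (V : Matrix (Fin N) (Fin N) ℂ)
    (hV : Vᴴ * V = 1) (x : Fin N → ℝ)
    (h : Ψᴴ * Ψ = V * diagonal (fun i => (x i : ℂ)) * Vᴴ) :
    (Finset.univ.filter (fun i => x i ≠ 0)).card ≤ M := by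
  have e : diagonal (fun i => (x i : ℂ)) = Vᴴ * (Ψᴴ * Ψ) * V := by
    rw [h]
    calc _ = (Vᴴ * V) * diagonal (fun i => (x i : ℂ)) * (Vᴴ * V) := by rw [hV]; simp
      _ = _ := by simp only [Matrix.mul_assoc]
  have h1 : (diagonal (fun i => (x i : ℂ))).rank ≤ M := by
    rw [e]
    exact (rank_mul_le_left _ _).trans ((rank_mul_le_right _ _).trans (rank_gram_le Ψ))
  rw [rank_diagonal, Fintype.card_subtype] at h1
  simpa using h1

lemma lower_bound {M N : ℕ} (hM : 0 < M) (hMN : M ≤ N) (B U : Matrix (Fin N) (Fin N) ℂ)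
    (hU : Uᴴ * U = 1) (hU' : U * Uᴴ = 1) (d : Fin N → ℝ) (hd : ∀ i, 0 ≤ d i) (had : Antitone d)
    (hB : B = U * diagonal (fun i => (d i : ℂ)) * Uᴴ) (Ψ : Matrix (Fin M) (Fin N) ℂ) :
    ∑ i : Fin N, (if (i : ℕ) < M then 0 else d i ^ 2) ≤ frobSq (Ψᴴ * Ψ - B) := by
  have hX : (Ψᴴ * Ψ).IsHermitian := isHermitian_conjTranspose_mul_self Ψ
  obtain ⟨V, hV, hV', hVX⟩ := herm_diag hX
  set x := hX.eigenvalues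
  have hcard := card_support_le Ψ V hV x hVX
  obtain ⟨I, hI, hIc⟩ := Finset.exists_superset_card_eq hcard (by simpa using hMN)
  set W := Vᴴ * U with hW
  have hWW : W * Wᴴ = 1 := by
    calc W * Wᴴ = Vᴴ * (U * Uᴴ) * V := by
          simp only [hW, conjTranspose_mul, conjTranspose_conjTranspose, Matrix.mul_assoc]
      _ = 1 := by rw [hU']; simpa using hV
  have hWW' : Wᴴ * W = 1 := by
    calc Wᴴ * W = Uᴴ * (V * Vᴴ) * U := by
          simp only [hW, conjTranspose_mul, conjTranspose_conjTranspose, Matrix.mul_assoc]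
      _ = 1 := by rw [hV']; simpa using hU
  have hrow : ∀ i, ∑ j, ‖W i j‖ ^ 2 = 1 := by
    intro i
    have := congrFun (congrFun hWW i) i
    simp only [mul_apply, conjTranspose_apply, one_apply_eq, Complex.star_def,
      Complex.mul_conj'] at this
    exact_mod_cast this
  have hcol : ∀ j, ∑ i, ‖W i j‖ ^ 2 = 1 := by
    intro j
    have := congrFun (congrFun hWW' j) j
    simp only [mul_apply, conjTranspose_apply, one_apply_eq, Complex.star_def,
      Complex.conj_mul'] at this
    exact_mod_cast this
  have e1 : Vᴴ * (Ψᴴ * Ψ - B) * U =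
      diagonal (fun i => (x i : ℂ)) * W - W * diagonal (fun i => (d i : ℂ)) := by
    rw [hVX, hB, mul_sub, sub_mul]
    congr 1
    · calc _ = (Vᴴ * V) * diagonal (fun i => (x i : ℂ)) * (Vᴴ * U) := by
            simp only [Matrix.mul_assoc]
        _ = _ := by rw [hV, Matrix.one_mul]
    · calc _ = (Vᴴ * U) * diagonal (fun i => (d i : ℂ)) * (Uᴴ * U) := by
            simp only [Matrix.mul_assoc]
        _ = _ := by rw [hU, Matrix.mul_one]
  have e2 : frobSq (Ψᴴ * Ψ - B) = ∑ i, ∑ j, (x i - d j) ^ 2 * ‖W i j‖ ^ 2 := by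
    rw [← frobSq_unitary V U _ hV' hU', e1]
    unfold frobSq
    refine Finset.sum_congr rfl fun i _ => Finset.sum_congr rfl fun j _ => ?_
    rw [Matrix.sub_apply, diagonal_mul, mul_diagonal]
    have : (x i : ℂ) * W i j - W i j * (d j : ℂ) = ((x i - d j : ℝ) : ℂ) * W i j := by
      push_cast; ring
    rw [this, norm_mul, mul_pow, Complex.norm_real, Real.norm_eq_abs, sq_abs]
  set q : Fin N → ℝ := fun j => ∑ i ∈ Iᶜ, ‖W i j‖ ^ 2 with hq
  have hq0 : ∀ j, 0 ≤ q j := fun j => by positivity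
  have hq1 : ∀ j, q j ≤ 1 := fun j => by
    rw [← hcol j]
    exact Finset.sum_le_sum_of_subset_of_nonneg (Finset.subset_univ _) (fun _ _ _ => by positivity)
  have hqs : ∑ j, q j = (N : ℝ) - M := by
    rw [hq, Finset.sum_comm, Finset.sum_congr rfl (fun i _ => hrow i)]
    simp [Finset.card_compl, hIc, hMN]
  have e3 : ∑ j, q j * d j ^ 2 ≤ frobSq (Ψᴴ * Ψ - B) := by
    rw [e2]
    calc ∑ j, q j * d j ^ 2 = ∑ i ∈ Iᶜ, ∑ j, (x i - d j) ^ 2 * ‖W i j‖ ^ 2 := by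
          simp only [hq, Finset.sum_mul]
          rw [Finset.sum_comm]
          refine Finset.sum_congr rfl fun i hi => Finset.sum_congr rfl fun j _ => ?_
          have : x i = 0 := by
            by_contra h
            exact (Finset.mem_compl.mp hi) (hI (by simpa using h))
          rw [this]; ring
      _ ≤ _ := Finset.sum_le_sum_of_subset_of_nonneg (Finset.subset_univ _)
          (fun _ _ _ => by positivity)
  refine le_trans ?_ e3
  let k : Fin N := ⟨M - 1, by omega⟩
  have hcount : ∑ i : Fin N, (if (i : ℕ) < M then (0:ℝ) else 1) = (N : ℝ) - M := by
    have h1 : ∑ i : Fin N, (if (i : ℕ) < M then (1:ℝ) else 0) = M := by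
      rw [Finset.sum_boole, Fin.card_filter_val_lt, min_eq_right hMN]
    have h2 : ∑ i : Fin N, ((if (i : ℕ) < M then (1:ℝ) else 0) + (if (i : ℕ) < M then (0:ℝ) else 1))
        = N := by
      rw [Finset.sum_congr rfl (g := fun _ => (1:ℝ)) (fun i _ => by split_ifs <;> simp)]
      simp
    rw [Finset.sum_add_distrib, h1] at h2
    linarith
  have hterm : ∀ j : Fin N, 0 ≤ (q j - (if (j : ℕ) < M then (0:ℝ) else 1)) * (d j ^ 2 - d k ^ 2) := by
    intro j
    split_ifs with h
    · have : d k ≤ d j := had (by rw [Fin.le_def]; simp only [k]; omega)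
      have := hd k
      have := hq0 j
      apply mul_nonneg <;> nlinarith
    · have : d j ≤ d k := had (by rw [Fin.le_def]; simp only [k]; omega)
      have := hd j
      have := hq1 j
      apply mul_nonneg_of_nonpos_of_nonpos <;> nlinarith
  have hsum := Finset.sum_nonneg (s := Finset.univ) (fun j _ => hterm j)
  have hexp : ∑ j : Fin N, (q j - (if (j : ℕ) < M then (0:ℝ) else 1)) * (d j ^ 2 - d k ^ 2)
      = ∑ j, q j * d j ^ 2 - ∑ i : Fin N, (if (i : ℕ) < M then 0 else d i ^ 2)
        - (∑ j, q j - ∑ i : Fin N, (if (i : ℕ) < M then (0:ℝ) else 1)) * d k ^ 2 := by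
    rw [← Finset.sum_sub_distrib, ← Finset.sum_sub_distrib, Finset.sum_mul,
      ← Finset.sum_sub_distrib]
    refine Finset.sum_congr rfl fun j _ => ?_
    split_ifs <;> ring
  rw [hexp, hqs, hcount] at hsum
  linarith

lemma exists_sort {M N : ℕ} (s : Fin N → ℝ) (I : Finset (Fin N)) (hI : I.card = M)
    (h : ∀ i ∈ I, ∀ j ∉ I, s j ≤ s i) :
    ∃ σ : Equiv.Perm (Fin N), Antitone (s ∘ σ) ∧ ∀ k, σ k ∈ I ↔ (k : ℕ) < M := by
  let key : Fin N → (ℝ ×ₗ ℕ)ᵒᵈ := fun i => OrderDual.toDual (toLex (s i, if i ∈ I then 1 else 0))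
  let σ := Tuple.sort key
  have hmono : Monotone (key ∘ σ) := Tuple.monotone_sort key
  have hkey : ∀ a b, a ≤ b → s (σ b) < s (σ a) ∨ (s (σ b) = s (σ a) ∧
      (if σ b ∈ I then 1 else 0) ≤ (if σ a ∈ I then 1 else 0)) := by
    intro a b hab
    have := hmono hab
    simpa only [Function.comp, key, OrderDual.toDual_le_toDual, Prod.Lex.toLex_le_toLex] using this
  have hlow : ∀ a b, a ≤ b → σ b ∈ I → σ a ∈ I := by
    intro a b hab hb
    by_contra ha
    have h1 := h _ hb _ ha
    rcases hkey a b hab with h2 | ⟨_, h2⟩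
    · linarith
    · simp [ha, hb] at h2
  refine ⟨σ, ?_, ?_⟩
  · intro a b hab
    rcases hkey a b hab with h2 | ⟨h2, _⟩
    · exact h2.le
    · exact h2.le
  · set K := Finset.univ.filter (fun k => σ k ∈ I) with hK
    have hKc : K.card = M := by
      rw [← hI]
      refine Finset.card_bij (fun k _ => σ k) ?_ ?_ ?_
      · intro a ha; simpa [hK] using ha
      · intro a _ b _ hab; exact σ.injective hab
      · intro b hb; exact ⟨σ.symm b, by simpa [hK] using hb, by simp⟩
    have hsub : Finset.univ.filter (fun k : Fin N => (k : ℕ) < M) ⊆ K := by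
      intro k hk
      by_contra hkK
      have : K ⊆ Finset.Iio k := by
        intro l hl
        rw [Finset.mem_Iio]
        by_contra hlk
        exact hkK (by
          simp only [hK, Finset.mem_filter, Finset.mem_univ, true_and] at hl ⊢
          exact hlow k l (not_lt.mp hlk) hl)
      have h2 := Finset.card_le_card this
      simp only [Fin.card_Iio, hKc] at h2
      simp at hk
      omega
    have hMN : M ≤ N := by
      rw [← hI]; simpa using Finset.card_le_univ I
    have heq := Finset.eq_of_subset_of_card_le hsub (by
      rw [Fin.card_filter_val_lt, min_eq_right hMN, hKc])
    intro k
    have := Finset.ext_iff.mp heq k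
    simp only [hK, Finset.mem_filter, Finset.mem_univ, true_and] at this
    exact this.symm

lemma core {M N : ℕ} (hM : 0 < M) (hMN : M ≤ N) (B : Matrix (Fin N) (Fin N) ℂ)
    (hB : B.PosSemidef) (Φ : Matrix (Fin M) (Fin N) ℂ) :
    (∀ Ψ : Matrix (Fin M) (Fin N) ℂ, frobSq (Φᴴ * Φ - B) ≤ frobSq (Ψᴴ * Ψ - B)) ↔
    ∃ (U : Matrix (Fin N) (Fin N) ℂ) (d : Fin N → ℝ),
      Uᴴ * U = 1 ∧ U * Uᴴ = 1 ∧ (∀ i, 0 ≤ d i) ∧ Antitone d ∧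
      B = U * Matrix.diagonal (fun (i : Fin N) => (d i : ℂ)) * Uᴴ ∧
      Φᴴ * Φ = 
        (U * Matrix.diagonal (fun (i : Fin N) => if (i : ℕ) < M then (d i : ℂ) else 0) * Uᴴ) := by
  constructor
  · intro h
    have hst := stationary B hB.1 Φ h
    set X := Φᴴ * Φ with hX
    have hXh : Xᴴ = X := by simp [hX]
    have hXB : X * B = X * X := by
      have : X * (X - B) = 0 := by rw [hX, Matrix.mul_assoc, ← hX, hst, Matrix.mul_zero]
      rw [mul_sub, sub_eq_zero] at this
      exact this.symm
    have hBX : B * X = X * X := by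
      have := congrArg conjTranspose hXB
      simpa [conjTranspose_mul, hXh, hB.1.eq] using this
    set Z := (2:ℂ) • X - B with hZ
    have hZh : Z.IsHermitian := by
      show Zᴴ = Z
      simp [hZ, hXh, hB.1.eq]
    have hZZ : Z * Z = B * B := by
      simp only [hZ, mul_sub, sub_mul, Matrix.smul_mul, Matrix.mul_smul, hXB, hBX]
      module
    obtain ⟨V, hV, hV', hVZ⟩ := herm_diag hZh
    set z := hZh.eigenvalues
    have hconj : ∀ D E : Matrix (Fin N) (Fin N) ℂ,
        (V * D * Vᴴ) * (V * E * Vᴴ) = V * (D * E) * Vᴴ := by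
      intro D E
      calc _ = V * D * (Vᴴ * V) * E * Vᴴ := by simp only [Matrix.mul_assoc]
        _ = _ := by rw [hV]; simp only [Matrix.mul_assoc, Matrix.one_mul]
    set s : Fin N → ℝ := fun i => |z i| with hs
    have hs0 : ∀ i, 0 ≤ s i := fun i => abs_nonneg _
    have hBs : B = V * diagonal (fun i => (s i : ℂ)) * Vᴴ := by
      apply psd_sq_unique hB
      · apply PosSemidef.mul_mul_conjTranspose_same
        rw [posSemidef_diagonal_iff]
        intro i
        exact_mod_cast hs0 i
      · rw [← hZZ, hVZ, hconj, hconj, diagonal_mul_diagonal, diagonal_mul_diagonal]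
        congr 3
        ext i
        rw [← Complex.ofReal_mul, ← Complex.ofReal_mul, hs, abs_mul_abs_self]
    set x : Fin N → ℝ := fun i => if 0 < z i then s i else 0 with hx
    have hXx : X = V * diagonal (fun i => (x i : ℂ)) * Vᴴ := by
      have h1 : X = (1/2 : ℂ) • (Z + B) := by rw [hZ]; module
      rw [h1, hVZ, hBs, ← Matrix.add_mul, ← Matrix.mul_add, ← Matrix.smul_mul, ← Matrix.mul_smul,
        diagonal_add, ← diagonal_smul]
      congr 3
      ext i
      simp only [Pi.smul_apply, smul_eq_mul, hx, hs]
      split_ifs with hz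
      · rw [abs_of_pos hz]; ring
      · rw [abs_of_nonpos (not_lt.mp hz)]; push_cast; ring
    have hcard := card_support_le Φ V hV x hXx
    have hJ : frobSq (X - B) = ∑ i, (x i - s i) ^ 2 := by
      rw [hXx, hBs, frobSq_conj_diag V hV hV']
      refine Finset.sum_congr rfl fun i _ => ?_
      rw [← Complex.ofReal_sub, Complex.norm_real, Real.norm_eq_abs, sq_abs]
    have hcomp : ∀ I : Finset (Fin N), I.card = M →
        ∑ i, (x i - s i) ^ 2 ≤ ∑ i, (if i ∈ I then 0 else s i ^ 2) := by
      intro I hI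
      obtain ⟨Ψ, hΨ⟩ := exists_factor V s hs0 I hI
      have := h Ψ
      rw [hJ, hΨ, hBs, frobSq_conj_diag V hV hV'] at this
      refine this.trans (le_of_eq (Finset.sum_congr rfl fun i _ => ?_))
      split_ifs <;> simp
    obtain ⟨I, hI, hIc⟩ := Finset.exists_superset_card_eq hcard (by simpa using hMN)
    have hxI : ∀ i, x i = if i ∈ I then s i else 0 := by
      have h0 : ∀ i, i ∉ I → x i = 0 := by
        intro i hi
        by_contra hne
        exact hi (hI (by simpa using hne))
      have h1 := hcomp I hIc
      have h2 : ∑ i, ((x i - s i) ^ 2 - (if i ∈ I then 0 else s i ^ 2)) ≤ 0 := by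
        rw [Finset.sum_sub_distrib]; linarith
      have h3 : ∀ i, 0 ≤ (x i - s i) ^ 2 - (if i ∈ I then 0 else s i ^ 2) := by
        intro i
        split_ifs with hi
        · simp only [sub_zero]; positivity
        · rw [h0 i hi]; simp
      have h4 := (Finset.sum_eq_zero_iff_of_nonneg (fun i _ => h3 i)).mp
        (le_antisymm h2 (Finset.sum_nonneg fun i _ => h3 i))
      intro i
      split_ifs with hi
      · have := h4 i (Finset.mem_univ _)
        simp only [hi, if_true, sub_zero] at this
        have := pow_eq_zero_iff (two_ne_zero) |>.mp this
        linarith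
      · exact h0 i hi
    have hswap : ∀ i ∈ I, ∀ j ∉ I, s j ≤ s i := by
      intro i hi j hj
      have hji : j ∉ I.erase i := fun hh => hj (Finset.mem_of_mem_erase hh)
      have hc : (insert j (I.erase i)).card = M := by
        rw [Finset.card_insert_of_notMem hji, Finset.card_erase_of_mem hi, hIc]; omega
      have h1 := hcomp _ hc
      have hne : i ≠ j := fun hh => hj (hh ▸ hi)
      have h2 : ∑ i, (x i - s i) ^ 2 = ∑ i, s i ^ 2 - ∑ i ∈ I, s i ^ 2 := by
        rw [← Finset.univ_inter I, ← Finset.sum_ite_mem, ← Finset.sum_sub_distrib]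
        refine Finset.sum_congr rfl fun k _ => ?_
        rw [hxI]; split_ifs <;> ring
      have h3 : ∀ K : Finset (Fin N), ∑ i, (if i ∈ K then 0 else s i ^ 2)
          = ∑ i, s i ^ 2 - ∑ i ∈ K, s i ^ 2 := by
        intro K
        rw [← Finset.univ_inter K, ← Finset.sum_ite_mem, ← Finset.sum_sub_distrib]
        refine Finset.sum_congr rfl fun k _ => ?_
        simp only [Finset.univ_inter]
        split_ifs <;> ring
      rw [h2, h3, Finset.sum_insert hji] at h1
      have h4 := Finset.add_sum_erase I (fun i => s i ^ 2) hi
      exact (pow_le_pow_iff_left₀ (hs0 j) (hs0 i) two_ne_zero).mp (by linarith)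
    obtain ⟨σ, hσ, hσI⟩ := exists_sort s I hIc hswap
    have hperm : ∀ a : Fin N → ℂ, V.submatrix id σ * diagonal (a ∘ σ) * (V.submatrix id σ)ᴴ
        = V * diagonal a * Vᴴ := by
      intro a
      have : diagonal (a ∘ σ) = (diagonal a).submatrix σ σ := by
        rw [submatrix_diagonal_equiv]
      rw [this, conjTranspose_submatrix, submatrix_mul_equiv, submatrix_mul_equiv, submatrix_id_id]
    refine ⟨V.submatrix id σ, s ∘ σ, ?_, ?_, fun i => hs0 _, hσ, ?_, ?_⟩
    · rw [conjTranspose_submatrix, ← submatrix_mul _ _ _ _ _ Function.bijective_id, hV,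
        submatrix_one_equiv]
    · rw [conjTranspose_submatrix, submatrix_mul_equiv, hV', submatrix_id_id]
    · rw [hBs, ← hperm]; rfl
    · rw [hXx, ← hperm]
      have hfun : (fun i => (x i : ℂ)) ∘ σ =
          fun i : Fin N => if (i : ℕ) < M then (((s ∘ σ) i : ℝ) : ℂ) else 0 := by
        funext i
        simp only [Function.comp_apply]
        simp only [hxI, hσI]
        split_ifs <;> simp
      rw [hfun]
  · rintro ⟨U, d, hU, hU', hd, had, hBd, hΦ⟩ Ψ
    refine le_trans (le_of_eq ?_) (lower_bound hM hMN B U hU hU' d hd had hBd Ψ)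
    rw [hΦ, hBd, frobSq_conj_diag U hU hU']
    refine Finset.sum_congr rfl fun i _ => ?_
    split_ifs <;> simp

/-- Theorem 1 of the paper: `Φ` minimizes `‖Aᴴ Φᴴ Φ A − T‖_F²` iff
`Φᴴ Φ = C⁻² S_M` for a rank-`M` truncation `S_M` of `S = A T Aᴴ`. -/
theorem stmt0 (N P M : ℕ) (hN : 0 < N) (hM : 0 < M) (hNP : N ≤ P) (hMN : M ≤ N)
    (C : ℝ) (hC : 0 < C)
    (A : Matrix (Fin N) (Fin P) ℂ) (hA : A * Aᴴ = (C : ℂ) • 1)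
    (T : Matrix (Fin P) (Fin P) ℂ) (hT : T.PosSemidef)
    (S : Matrix (Fin N) (Fin N) ℂ) (hS : S = A * T * Aᴴ)
    (Φ : Matrix (Fin M) (Fin N) ℂ) :
    (∀ Ψ : Matrix (Fin M) (Fin N) ℂ,
        frobSq (Aᴴ * Φᴴ * Φ * A - T) ≤ frobSq (Aᴴ * Ψᴴ * Ψ * A - T)) ↔
    ∃ (U : Matrix (Fin N) (Fin N) ℂ) (d : Fin N → ℝ),
      Uᴴ * U = 1 ∧ U * Uᴴ = 1 ∧ (∀ i, 0 ≤ d i) ∧ Antitone d ∧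
      S = U * Matrix.diagonal (fun (i : Fin N) => (d i : ℂ)) * Uᴴ ∧
      Φᴴ * Φ = ((C : ℂ) ^ 2)⁻¹ •
        (U * Matrix.diagonal (fun (i : Fin N) => if (i : ℕ) < M then (d i : ℂ) else 0) * Uᴴ) := by
  have hC2 : (0:ℝ) < C ^ 2 := by positivity
  have hC0 : ((C:ℂ) ^ 2) ≠ 0 := by exact_mod_cast hC2.ne'
  set B : Matrix (Fin N) (Fin N) ℂ := ((C : ℂ) ^ 2)⁻¹ • S with hB
  have hSB : S = ((C : ℂ) ^ 2) • B := by rw [hB, smul_smul, mul_inv_cancel₀ hC0, one_smul]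
  have hSp : S.PosSemidef := by rw [hS]; exact hT.mul_mul_conjTranspose_same A
  have hBp : B.PosSemidef := by
    apply hSp.smul
    rw [← Complex.ofReal_pow, ← Complex.ofReal_inv]
    exact_mod_cast (inv_pos.mpr hC2).le
  have hred : ∀ Ψ : Matrix (Fin M) (Fin N) ℂ, frobSq (Aᴴ * Ψᴴ * Ψ * A - T) =
      C ^ 2 * frobSq (Ψᴴ * Ψ - B) + (frobSq T - C ^ 2 * frobSq B) := by
    intro Ψ
    rw [← reduction C A hA T hT.1 B hBp.1 (by rw [← hS, ← hSB]) _
      (isHermitian_conjTranspose_mul_self Ψ)]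
    simp only [Matrix.mul_assoc]
  have hscale : ∀ (c : ℂ) (U : Matrix (Fin N) (Fin N) ℂ) (a : Fin N → ℂ),
      c • (U * diagonal a * Uᴴ) = U * diagonal (fun i => c * a i) * Uᴴ := by
    intro c U a
    rw [← Matrix.smul_mul, ← Matrix.mul_smul, ← diagonal_smul]; rfl
  have h1 : (∀ Ψ : Matrix (Fin M) (Fin N) ℂ,
        frobSq (Aᴴ * Φᴴ * Φ * A - T) ≤ frobSq (Aᴴ * Ψᴴ * Ψ * A - T)) ↔
      (∀ Ψ : Matrix (Fin M) (Fin N) ℂ, frobSq (Φᴴ * Φ - B) ≤ frobSq (Ψᴴ * Ψ - B)) := by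
    refine forall_congr' fun Ψ => ?_
    rw [hred, hred, add_le_add_iff_right, mul_le_mul_iff_right₀ hC2]
  rw [h1, core hM hMN B hBp Φ]
  constructor
  · rintro ⟨U, d, hU, hU', hd, had, hBd, hΦ⟩
    refine ⟨U, fun i => C ^ 2 * d i, hU, hU', fun i => mul_nonneg hC2.le (hd i),
      fun a b hab => mul_le_mul_of_nonneg_left (had hab) hC2.le, ?_, ?_⟩
    · rw [hSB, hBd, hscale]; simp
    · rw [hΦ, hscale]
      congr 3
      ext i
      split_ifs
      · push_cast; field_simp
      · simp
  · rintro ⟨U, d, hU, hU', hd, had, hBd, hΦ⟩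
    refine ⟨U, fun i => (C ^ 2)⁻¹ * d i, hU, hU', fun i => mul_nonneg (inv_pos.mpr hC2).le (hd i),
      fun a b hab => mul_le_mul_of_nonneg_left (had hab) (inv_pos.mpr hC2).le, ?_, ?_⟩
    · rw [hB, hBd, hscale]; simp
    · rw [hΦ, hscale]
      congr 3
      ext i
      split_ifs
      · push_cast; rfl
      · simp
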